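/- Let φ be a CNF formula with variables x_1,…,x_l and nonempty clauses c_1,…,c_m. Let G=(V,A,2) be the temporal graph with V = ⋃_{i∈[l]} {x_i^p, x_i^n, z_i^p, z_i^n, y_i} ∪ {c_1,…,c_m} ∪ {r} and A consisting of: for each α∈{p,n} and i∈[l], the arcs (r,x_i^α,2,2), (r,z_i^α,1,1), (z_i^α,x_i^α,1,1) and (x_i^α,y_i,1,1); the arc (x_i^p,c_j,1,1) for every clause c_j and variable x_i occurring positively in c_j; and the arc (x_i^n,c_j,1,1) for every clause c_j and variable x_i occurring negatively in c_j. Then φ is satisfiable if and only if there exists an MT-TOSS G'=(V,A',2) with root r of G such that |A'| ≤ 6l+m. -/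

import Mathlib

open scoped Classical

universe u

/-- A temporal arc `(u, v, s, t)`: tail `u`, head `v`, starting time `s`, arrival time `t`. -/
abbrev TArc (α : Type u) := α × α × ℕ × ℕ

/-- The tail vertex of a temporal arc. -/
def TArc.tail {α : Type u} (a : TArc α) : α := a.1

/-- The head vertex of a temporal arc. -/
def TArc.head {α : Type u} (a : TArc α) : α := a.2.1

/-- The starting time of a temporal arc. -/
def TArc.ts {α : Type u} (a : TArc α) : ℕ := a.2.2.1

/-- The arrival time of a temporal arc. -/
def TArc.ta {α : Type u} (a : TArc α) : ℕ := a.2.2.2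

/-- The elapsed time of a temporal arc. -/
def TArc.el {α : Type u} (a : TArc α) : ℕ := TArc.ta a - TArc.ts a

/-- A temporal graph `(V, A, τ)`. -/
structure TempGraph (α : Type u) where
  V : Finset α
  A : Finset (TArc α)
  τ : ℕ
  nonempty : V.Nonempty
  valid : ∀ a ∈ A, TArc.tail a ∈ V ∧ TArc.head a ∈ V ∧ TArc.tail a ≠ TArc.head a ∧
      1 ≤ TArc.ts a ∧ TArc.ts a ≤ TArc.ta a ∧ TArc.ta a ≤ τ

variable {α : Type u}

/-- `IsWalk S u v L` : `L` is the list of arcs of a temporal `(u,v)`-walk using arcs from `S`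
(the trivial walk, `L = []`, requires `u = v`). -/
def IsWalk (S : Finset (TArc α)) : α → α → List (TArc α) → Prop
  | u, v, [] => u = v
  | u, v, a :: L => a ∈ S ∧ TArc.tail a = u ∧ (∀ b ∈ L.head?, TArc.ta a ≤ TArc.ts b) ∧
      IsWalk S (TArc.head a) v L

/-- The starting time of a walk (`0` for the trivial walk). -/
def tsW (L : List (TArc α)) : ℕ := (L.map TArc.ts).headI

/-- The arrival time of a walk (`0` for the trivial walk). -/
def taW (L : List (TArc α)) : ℕ := (L.map TArc.ta).getLastD 0

/-- The duration of a walk. -/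
def durW (L : List (TArc α)) : ℕ := taW L - tsW L

/-- The travelling time of a walk. -/
def ttW (L : List (TArc α)) : ℕ := (L.map TArc.el).sum

/-- The waiting time of a walk. -/
def waitW (L : List (TArc α)) : ℕ :=
  (List.zipWith (fun a b => TArc.ts b - TArc.ta a) L L.tail).sum

/-- The final vertex of a walk starting at `u` with arc list `L`. -/
def endv (u : α) (L : List (TArc α)) : α := (L.map TArc.head).getLastD u

/-- The sequence of vertices of a walk starting at `u` with arc list `L`. -/
def verts (u : α) (L : List (TArc α)) : List α := u :: L.map TArc.head

/-- A walk is a (temporal) path when its vertices are pairwise distinct. -/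
def IsPathList (u : α) (L : List (TArc α)) : Prop := (verts u L).Nodup

/-- The six optimisation criteria: earliest arrival, fastest time, latest departure,
minimum transfers, minimum waiting time, shortest travelling time. -/
inductive DistKind : Type
  | EA | FT | LD | MT | MW | ST
  deriving DecidableEq

/-- The value of a walk for each criterion. -/
def wval : DistKind → List (TArc α) → ℕ
  | .EA, L => taW L
  | .FT, L => durW L
  | .LD, L => tsW L
  | .MT, L => L.length
  | .MW, L => waitW L
  | .ST, L => ttW L

/-- `Realizes d S u v L` : `L` is a temporal `(u,v)`-walk within `S` attaining the optimum
(minimum, or maximum for `LD`) of the criterion `d` among all temporal `(u,v)`-walks in `S`. -/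
def Realizes (d : DistKind) (S : Finset (TArc α)) (u v : α) (L : List (TArc α)) : Prop :=
  IsWalk S u v L ∧ ∀ L', IsWalk S u v L' →
    if d = DistKind.LD then wval d L' ≤ wval d L else wval d L ≤ wval d L'

/-- The distance value `d_G(u,v) ∈ ℕ∞` (`+∞` when `v` is not temporally reachable from `u`;
`LD_G(u,u) = τ + 1`). -/
noncomputable def distVal (d : DistKind) (G : TempGraph α) (u v : α) : ℕ∞ :=
  if d = DistKind.LD then
    (if u = v then ((G.τ : ℕ∞) + 1)
     else if ∃ L, IsWalk G.A u v L then
       sSup {n : ℕ∞ | ∃ L, IsWalk G.A u v L ∧ n = (tsW L : ℕ∞)}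
     else ⊤)
  else sInf {n : ℕ∞ | ∃ L, IsWalk G.A u v L ∧ n = (wval d L : ℕ∞)}

/-- Every vertex of `Vs` is temporally reachable from `r` using arcs from `S`. -/
def ReachAll (S : Finset (TArc α)) (Vs : Finset α) (r : α) : Prop :=
  ∀ v ∈ Vs, ∃ L, IsWalk S r v L

/-- `B` is a temporal out-branching (TOB) with root `r`: its arc set is a minimal set of
temporal arcs such that every vertex of `B` is temporally reachable from `r`. -/
def IsTOB (B : TempGraph α) (r : α) : Prop :=
  r ∈ B.V ∧ ReachAll B.A B.V r ∧ ∀ S ⊂ B.A, ¬ ReachAll S B.V r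

/-- `B` is a temporal subgraph of `G`. -/
def IsSubgraph (B G : TempGraph α) : Prop :=
  B.V ⊆ G.V ∧ B.A ⊆ G.A ∧ B.τ ≤ G.τ

/-- `B` is a `d`-TOB of `G` rooted at `r`. -/
def IsDTOB (d : DistKind) (G B : TempGraph α) (r : α) : Prop :=
  IsTOB B r ∧ IsSubgraph B G ∧ ∀ v ∈ B.V, distVal d B r v = distVal d G r v

/-- `B` is a spanning `d`-TOB of `G` rooted at `r`. -/
def IsSpanningDTOB (d : DistKind) (G B : TempGraph α) (r : α) : Prop :=
  IsDTOB d G B r ∧ B.V = G.V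

/-- `B` is a maximum `d`-TOB of `G` rooted at `r`. -/
def IsMaxDTOB (d : DistKind) (G B : TempGraph α) (r : α) : Prop :=
  IsDTOB d G B r ∧ ∀ B', IsDTOB d G B' r → B'.V.card ≤ B.V.card

/-- The in-degree of `v` with respect to the arc set `S`. -/
noncomputable def inDeg (S : Finset (TArc α)) (v : α) : ℕ :=
  (S.filter fun a => TArc.head a = v).card

/-- A walk in a (static) digraph with arc set `E`. -/
def IsDWalk (E : Finset (α × α)) : α → α → List (α × α) → Prop
  | u, v, [] => u = v
  | u, v, e :: L => e ∈ E ∧ e.1 = u ∧ IsDWalk E e.2 v L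

/-- The digraph `(Vs, E)` is an out-branching with root `r`: every `v ∈ Vs` is the end of
a unique `(r,v)`-walk. -/
def IsOutBranching (Vs : Finset α) (E : Finset (α × α)) (r : α) : Prop :=
  ∀ v ∈ Vs, ∃! L, IsDWalk E r v L

/-- The arc of the underlying multidigraph corresponding to a temporal arc. -/
def proj (a : TArc α) : α × α := (TArc.tail a, TArc.head a)

/-- The temporal subgraph of `G` induced by a set of vertices `Z`. -/
noncomputable def induced (G : TempGraph α) (Z : Finset α) (hne : Z.Nonempty) (hZ : Z ⊆ G.V) :
    TempGraph α where
  V := Z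
  A := G.A.filter fun a => TArc.tail a ∈ Z ∧ TArc.head a ∈ Z
  τ := G.τ
  nonempty := hne
  valid := by
    intro a ha
    simp only [Finset.mem_filter] at ha
    obtain ⟨haA, h1, h2⟩ := ha
    obtain ⟨-, -, h3, h4, h5, h6⟩ := G.valid a haA
    exact ⟨h1, h2, h3, h4, h5, h6⟩

/-- The reverse of a temporal arc with respect to lifetime `τ`. -/
def TArc.rev (τ : ℕ) (a : TArc α) : TArc α :=
  (TArc.head a, TArc.tail a, τ + 1 - TArc.ta a, τ + 1 - TArc.ts a)

/-- The reverse of a temporal graph. -/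
noncomputable def TempGraph.rev (G : TempGraph α) : TempGraph α where
  V := G.V
  A := G.A.image (TArc.rev G.τ)
  τ := G.τ
  nonempty := G.nonempty
  valid := by
    intro b hb
    simp only [Finset.mem_image] at hb
    obtain ⟨a, ha, rfl⟩ := hb
    obtain ⟨h1, h2, h3, h4, h5, h6⟩ := G.valid a ha
    refine ⟨h2, h1, Ne.symm h3, ?_, ?_, ?_⟩ <;>
      simp only [TArc.rev, TArc.tail, TArc.head, TArc.ts, TArc.ta] at * <;> omega

/-- The reverse of a temporal walk. -/
def revWalk (τ : ℕ) (L : List (TArc α)) : List (TArc α) := (L.map (TArc.rev τ)).reverse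

/-- Every vertex of `Vs` temporally reaches `r` using arcs from `S`. -/
def CoReachAll (S : Finset (TArc α)) (Vs : Finset α) (r : α) : Prop :=
  ∀ v ∈ Vs, ∃ L, IsWalk S v r L

/-- `B` is a temporal in-branching (TIB) with root `r`. -/
def IsTIB (B : TempGraph α) (r : α) : Prop :=
  r ∈ B.V ∧ CoReachAll B.A B.V r ∧ ∀ S ⊂ B.A, ¬ CoReachAll S B.V r

/-- `B` is a `d`-TIB of `G` rooted at `r`. -/
def IsDTIB (d : DistKind) (G B : TempGraph α) (r : α) : Prop :=
  IsTIB B r ∧ IsSubgraph B G ∧ ∀ v ∈ B.V, distVal d B v r = distVal d G v r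

/-- `B` is a maximum `d`-TIB of `G` rooted at `r`. -/
def IsMaxDTIB (d : DistKind) (G B : TempGraph α) (r : α) : Prop :=
  IsDTIB d G B r ∧ ∀ B', IsDTIB d G B' r → B'.V.card ≤ B.V.card

/-- The reverse of a temporal subgraph, with respect to the ambient lifetime `τ`. -/
noncomputable def revSub (τ : ℕ) (B : TempGraph α) (h : B.τ ≤ τ) : TempGraph α where
  V := B.V
  A := B.A.image (TArc.rev τ)
  τ := τ
  nonempty := B.nonempty
  valid := by
    intro b hb
    simp only [Finset.mem_image] at hb
    obtain ⟨a, ha, rfl⟩ := hb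
    obtain ⟨h1, h2, h3, h4, h5, h6⟩ := B.valid a ha
    refine ⟨h2, h1, Ne.symm h3, ?_, ?_, ?_⟩ <;>
      simp only [TArc.rev, TArc.tail, TArc.head, TArc.ts, TArc.ta] at * <;> omega

/-- `L` (a walk from `u`) is `d`-prefix-optimal: every prefix of it realizes the distance `d`
from `u` to the end vertex of the prefix. -/
def PrefixOptimal (d : DistKind) (S : Finset (TArc α)) (u : α) (L : List (TArc α)) : Prop :=
  ∀ h ≤ L.length, Realizes d S u (endv u (L.take h)) (L.take h)

/-- `EAd_G(u,v)`: the minimum arrival time among the walks realizing `d_G(u,v)`. -/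
noncomputable def eaVal (d : DistKind) (G : TempGraph α) (u v : α) : ℕ∞ :=
  sInf {n : ℕ∞ | ∃ L, Realizes d G.A u v L ∧ n = (taW L : ℕ∞)}

/-- `G'` is a `d`-temporal out-spanning subgraph (d-TOSS) with root `r` of `G`. -/
def IsDTOSS (d : DistKind) (G G' : TempGraph α) (r : α) : Prop :=
  IsSubgraph G' G ∧ G'.V = G.V ∧
    ∀ v ∈ G.V, ∃ L, IsWalk G'.A r v L ∧ Realizes d G.A r v L

/-- Satisfiability of a CNF formula given by the positive/negative occurrence sets
of its clauses. -/
def Satisfiable (n m : ℕ) (pos neg : Fin m → Finset (Fin n)) : Prop :=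
  ∃ σ : Fin n → Bool, ∀ j : Fin m, (∃ i ∈ pos j, σ i = true) ∨ ∃ i ∈ neg j, σ i = false

/-- Vertex set of the reduction: `x_i^p`, `x_i^n`, `z_i^p`, `z_i^n`, `y_i`, clauses `c_j`,
and the root `r`. -/
abbrev V19 (l m : ℕ) :=
  Sum (Fin l) (Sum (Fin l) (Sum (Fin l) (Sum (Fin l) (Sum (Fin l) (Sum (Fin m) Unit)))))

def xp19 (l m : ℕ) (i : Fin l) : V19 l m := Sum.inl i
def xn19 (l m : ℕ) (i : Fin l) : V19 l m := Sum.inr (Sum.inl i)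
def zp19 (l m : ℕ) (i : Fin l) : V19 l m := Sum.inr (Sum.inr (Sum.inl i))
def zn19 (l m : ℕ) (i : Fin l) : V19 l m := Sum.inr (Sum.inr (Sum.inr (Sum.inl i)))
def y19 (l m : ℕ) (i : Fin l) : V19 l m := Sum.inr (Sum.inr (Sum.inr (Sum.inr (Sum.inl i))))
def c19 (l m : ℕ) (j : Fin m) : V19 l m :=
  Sum.inr (Sum.inr (Sum.inr (Sum.inr (Sum.inr (Sum.inl j)))))
def rt19 (l m : ℕ) : V19 l m :=
  Sum.inr (Sum.inr (Sum.inr (Sum.inr (Sum.inr (Sum.inr ())))))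

/-- The temporal graph of the reduction of Theorem `thm:MT_min_hard` (elapsed time 0 case):
for each `α ∈ {p,n}` and `i`, the arcs `(r,x_i^α,2,2)`, `(r,z_i^α,1,1)`, `(z_i^α,x_i^α,1,1)`,
`(x_i^α,y_i,1,1)`; the arc `(x_i^p,c_j,1,1)` when `x_i` occurs positively in `c_j`, and
`(x_i^n,c_j,1,1)` when `x_i` occurs negatively in `c_j`; the lifetime is 2. -/
noncomputable def G19 (l m : ℕ) (pos neg : Fin m → Finset (Fin l)) :
    TempGraph (V19 l m) where
  V := Finset.univ
  A :=
    (Finset.univ.image fun i : Fin l => ((rt19 l m, xp19 l m i, 2, 2) : TArc (V19 l m)))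
    ∪ (Finset.univ.image fun i : Fin l => ((rt19 l m, xn19 l m i, 2, 2) : TArc (V19 l m)))
    ∪ (Finset.univ.image fun i : Fin l => ((rt19 l m, zp19 l m i, 1, 1) : TArc (V19 l m)))
    ∪ (Finset.univ.image fun i : Fin l => ((rt19 l m, zn19 l m i, 1, 1) : TArc (V19 l m)))
    ∪ (Finset.univ.image fun i : Fin l => ((zp19 l m i, xp19 l m i, 1, 1) : TArc (V19 l m)))
    ∪ (Finset.univ.image fun i : Fin l => ((zn19 l m i, xn19 l m i, 1, 1) : TArc (V19 l m)))
    ∪ (Finset.univ.image fun i : Fin l => ((xp19 l m i, y19 l m i, 1, 1) : TArc (V19 l m)))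
    ∪ (Finset.univ.image fun i : Fin l => ((xn19 l m i, y19 l m i, 1, 1) : TArc (V19 l m)))
    ∪ (Finset.univ.biUnion fun j : Fin m =>
        ((pos j).image fun i => ((xp19 l m i, c19 l m j, 1, 1) : TArc (V19 l m)))
        ∪ ((neg j).image fun i => ((xn19 l m i, c19 l m j, 1, 1) : TArc (V19 l m))))
  τ := 2
  nonempty := ⟨rt19 l m, Finset.mem_univ _⟩
  valid := by
    intro a ha
    simp only [Finset.mem_union, Finset.mem_image, Finset.mem_biUnion, Finset.mem_univ,
      true_and] at ha
    rcases ha with ((((((((⟨i, rfl⟩ | ⟨i, rfl⟩) | ⟨i, rfl⟩) | ⟨i, rfl⟩) | ⟨i, rfl⟩)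
        | ⟨i, rfl⟩) | ⟨i, rfl⟩) | ⟨i, rfl⟩) | ⟨j, (⟨i, -, rfl⟩ | ⟨i, -, rfl⟩)⟩) <;>
      exact ⟨Finset.mem_univ _, Finset.mem_univ _,
        by simp [TArc.tail, TArc.head, xp19, xn19, zp19, zn19, y19, c19, rt19],
        by norm_num [TArc.ts], by norm_num [TArc.ts, TArc.ta], by norm_num [TArc.ta]⟩

/-! Seen from the root, a walk of the reduction graph is determined by its last arc:
`y_i` and `c_j` are only reached through some literal `p`, along `r → z_p → x_p` at time 1, because
the direct arc `r → x_p` arrives too late to be continued. That direct arc is nevertheless the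
unique shortest walk to `x_p`. So an MT-TOSS contains all `4l` arcs leaving the root, for each
variable `x_i` two arcs `z_p → x_p → y_i` with `p` a literal of `x_i`, and for each clause `c_j` an
arc `x_p → c_j` together with `z_p → x_p`. Even without the last-mentioned arcs `z_p → x_p` these
are `6l + m` distinct arcs, so within the budget the literals `p` leading to the clauses are among
those chosen for the variables, and this choice is a satisfying assignment. -/

section Walks

variable {d : DistKind} {A S T : Finset (TArc α)} {u v : α} {L : List (TArc α)} {a : TArc α}

theorem IsWalk.mono (hST : S ⊆ T) (h : IsWalk S u v L) : IsWalk T u v L := by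
  induction L generalizing u with
  | nil => exact h
  | cons a L ih => exact ⟨hST h.1, h.2.1, h.2.2.1, ih h.2.2.2⟩

theorem isWalk_concat_iff : IsWalk S u v (L ++ [a]) ↔
    IsWalk S u a.tail L ∧ (∀ b ∈ L.getLast?, b.ta ≤ a.ts) ∧ a ∈ S ∧ a.head = v := by
  induction L generalizing u with
  | nil => grind [IsWalk]
  | cons b L ih => cases L <;> grind [IsWalk]

theorem IsWalk.exists_concat (h : IsWalk S u v L) (huv : u ≠ v) :
    ∃ L' a, L = L' ++ [a] ∧ a ∈ S ∧ a.head = v := by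
  obtain rfl | ⟨L', a, rfl⟩ := L.eq_nil_or_concat'
  · exact absurd h huv
  · exact ⟨L', a, rfl, (isWalk_concat_iff.1 h).2.2⟩

/-- Some walk from `u` to `v` in `S` is optimal for the criterion `d` among the walks in `A`. -/
def HasOptimalWalk (d : DistKind) (A S : Finset (TArc α)) (u v : α) : Prop :=
  ∃ L, IsWalk S u v L ∧ Realizes d A u v L

theorem hasOptimalWalk_MT_iff (hSA : S ⊆ A) : HasOptimalWalk .MT A S u v ↔
    ∃ L, IsWalk S u v L ∧ ∀ L', IsWalk A u v L' → L.length ≤ L'.length :=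
  exists_congr fun _ => and_congr_right fun hL => and_iff_right (hL.mono hSA)

theorem hasOptimalWalk_MT_iff_exists_isWalk (hSA : S ⊆ A) {k : ℕ}
    (hk : ∀ L, IsWalk A u v L → L.length = k) :
    HasOptimalWalk .MT A S u v ↔ ∃ L, IsWalk S u v L := by
  rw [hasOptimalWalk_MT_iff hSA]
  exact exists_congr fun L => and_iff_left_of_imp fun hL L' hL' =>
    (hk L (hL.mono hSA)).trans_le (hk L' hL').ge

theorem exists_isDTOSS_card_le_iff {G : TempGraph α} {r : α} {k : ℕ} :
    (∃ G', IsDTOSS d G G' r ∧ G'.τ = G.τ ∧ G'.A.card ≤ k) ↔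
      ∃ S ⊆ G.A, S.card ≤ k ∧ ∀ v ∈ G.V, HasOptimalWalk d G.A S r v := by
  constructor
  · rintro ⟨G', ⟨⟨-, hA, -⟩, -, hwalk⟩, -, hcard⟩
    exact ⟨G'.A, hA, hcard, hwalk⟩
  · rintro ⟨S, hS, hcard, hwalk⟩
    let G' : TempGraph α := ⟨G.V, S, G.τ, G.nonempty, fun a ha => G.valid a (hS ha)⟩
    exact ⟨G', ⟨⟨subset_rfl, hS, le_rfl⟩, rfl, hwalk⟩, rfl, hcard⟩

end Walks

/-- A literal: a variable together with its sign, `true` for a positive occurrence. -/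
abbrev Literal (l : ℕ) := Bool × Fin l

/-- The vertices of the reduction graph, with the positive and negative copies indexed uniformly
by literals. -/
inductive GadgetVertex (l m : ℕ) : Type
  | x (p : Literal l)
  | z (p : Literal l)
  | y (i : Fin l)
  | c (j : Fin m)
  | r

namespace GadgetVertex

variable {l m : ℕ} {pos neg : Fin m → Finset (Fin l)}

/-- The identification of gadget vertices with the vertices of `G19`. -/
def toV : GadgetVertex l m ≃ V19 l m where
  toFun
    | x (true, i) => xp19 l m i
    | x (false, i) => xn19 l m i
    | z (true, i) => zp19 l m i
    | z (false, i) => zn19 l m i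
    | y i => y19 l m i
    | c j => c19 l m j
    | r => rt19 l m
  invFun
    | .inl i => x (true, i)
    | .inr (.inl i) => x (false, i)
    | .inr (.inr (.inl i)) => z (true, i)
    | .inr (.inr (.inr (.inl i))) => z (false, i)
    | .inr (.inr (.inr (.inr (.inl i)))) => y i
    | .inr (.inr (.inr (.inr (.inr (.inl j))))) => c j
    | .inr (.inr (.inr (.inr (.inr (.inr _))))) => r
  left_inv := by rintro (⟨_ | _, _⟩ | ⟨_ | _, _⟩ | _ | _ | _) <;> rfl
  right_inv := by rintro (_ | _ | _ | _ | _ | _ | _) <;> rfl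

/-- The temporal arc from `v` to `w` that starts and arrives at time `t`. -/
def arc (v w : GadgetVertex l m) (t : ℕ) : TArc (V19 l m) := (toV v, toV w, t, t)

section Arc

variable {v w v' w' : GadgetVertex l m} {t t' : ℕ}

@[simp] theorem arc_inj : arc v w t = arc v' w' t' ↔ v = v' ∧ w = w' ∧ t = t' := by
  simp [arc]

@[simp] theorem tail_arc : (arc v w t).tail = toV v := rfl

@[simp] theorem head_arc : (arc v w t).head = toV w := rfl

@[simp] theorem ts_arc : (arc v w t).ts = t := rfl

@[simp] theorem ta_arc : (arc v w t).ta = t := rfl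

end Arc

/-- The literal `p` occurs in the clause `j`. -/
def Occurs (pos neg : Fin m → Finset (Fin l)) (p : Literal l) (j : Fin m) : Prop :=
  p.2 ∈ bif p.1 then pos j else neg j

theorem satisfiable_iff_exists_occurs : Satisfiable l m pos neg ↔
    ∃ σ : Fin l → Bool, ∀ j, ∃ i, Occurs pos neg (σ i, i) j := by
  refine exists_congr fun σ => forall_congr' fun j => ?_
  rw [← exists_or]
  refine exists_congr fun i => ?_
  cases h : σ i <;> simp [Occurs]

/-- The arcs of `G19`, one constructor for each kind of arc, treating both signs at once. -/
inductive IsGadgetArc (pos neg : Fin m → Finset (Fin l)) : TArc (V19 l m) → Prop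
  | rx (p : Literal l) : IsGadgetArc pos neg (arc r (x p) 2)
  | rz (p : Literal l) : IsGadgetArc pos neg (arc r (z p) 1)
  | zx (p : Literal l) : IsGadgetArc pos neg (arc (z p) (x p) 1)
  | xy (p : Literal l) : IsGadgetArc pos neg (arc (x p) (y p.2) 1)
  | xc {p : Literal l} {j : Fin m} (hp : Occurs pos neg p j) :
      IsGadgetArc pos neg (arc (x p) (c j) 1)

theorem mem_arcs_iff {a : TArc (V19 l m)} :
    a ∈ (G19 l m pos neg).A ↔ IsGadgetArc pos neg a := by
  constructor
  · simp only [G19, Finset.mem_union, Finset.mem_image, Finset.mem_biUnion, Finset.mem_univ,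
      true_and]
    rintro ((((((((⟨i, rfl⟩ | ⟨i, rfl⟩) | ⟨i, rfl⟩) | ⟨i, rfl⟩) | ⟨i, rfl⟩) | ⟨i, rfl⟩) |
      ⟨i, rfl⟩) | ⟨i, rfl⟩) | ⟨j, ⟨i, hi, rfl⟩ | ⟨i, hi, rfl⟩⟩)
    exacts [.rx (true, i), .rx (false, i), .rz (true, i), .rz (false, i), .zx (true, i),
      .zx (false, i), .xy (true, i), .xy (false, i), .xc (p := (true, i)) hi,
      .xc (p := (false, i)) hi]
  · rintro (⟨_ | _, i⟩ | ⟨_ | _, i⟩ | ⟨_ | _, i⟩ | ⟨_ | _, i⟩ | @⟨⟨_ | _, i⟩, j, hp⟩) <;>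
      simp_all [G19, Occurs, arc, toV, xp19, xn19, zp19, zn19, y19, c19, rt19]

theorem occurs_of_mem_arcs {p : Literal l} {j : Fin m}
    (h : arc (x p) (c j) 1 ∈ (G19 l m pos neg).A) : Occurs pos neg p j := by
  generalize ha : arc (x p) (c j) 1 = a at h
  cases mem_arcs_iff.1 h <;> simp_all

section InArcs

variable {a : TArc (V19 l m)}

theorem head_ne_r (ha : a ∈ (G19 l m pos neg).A) : a.head ≠ toV r := by
  cases mem_arcs_iff.1 ha <;> simp

theorem eq_of_head_eq_z {p : Literal l} (ha : a ∈ (G19 l m pos neg).A) (h : a.head = toV (z p)) :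
    a = arc r (z p) 1 := by
  cases mem_arcs_iff.1 ha <;> simp_all

theorem eq_of_head_eq_x {p : Literal l} (ha : a ∈ (G19 l m pos neg).A) (h : a.head = toV (x p)) :
    a = arc r (x p) 2 ∨ a = arc (z p) (x p) 1 := by
  cases mem_arcs_iff.1 ha <;> simp_all

theorem exists_eq_of_head_eq_y {i : Fin l} (ha : a ∈ (G19 l m pos neg).A)
    (h : a.head = toV (y i)) : ∃ b, a = arc (x (b, i)) (y i) 1 := by
  cases mem_arcs_iff.1 ha with
  | xy p =>
    obtain rfl : p.2 = i := by simpa using h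
    exact ⟨p.1, rfl⟩
  | _ => simp at h

theorem exists_eq_of_head_eq_c {j : Fin m} (ha : a ∈ (G19 l m pos neg).A)
    (h : a.head = toV (c j)) : ∃ p, a = arc (x p) (c j) 1 := by
  cases mem_arcs_iff.1 ha <;> simp_all

end InArcs

section RootWalks

variable {p : Literal l} {L : List (TArc (V19 l m))}

theorem eq_nil_of_isWalk_r (h : IsWalk (G19 l m pos neg).A (toV r) (toV r) L) : L = [] := by
  obtain rfl | ⟨L, a, rfl⟩ := L.eq_nil_or_concat'
  · rfl
  · obtain ⟨-, -, ha, hhead⟩ := isWalk_concat_iff.1 h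
    exact absurd hhead (head_ne_r ha)

theorem eq_singleton_of_isWalk_z (h : IsWalk (G19 l m pos neg).A (toV r) (toV (z p)) L) :
    L = [arc r (z p) 1] := by
  obtain ⟨L, a, rfl, ha, hhead⟩ := h.exists_concat (by simp)
  obtain rfl := eq_of_head_eq_z ha hhead
  obtain rfl := eq_nil_of_isWalk_r (isWalk_concat_iff.1 h).1
  rfl

theorem eq_singleton_or_eq_pair_of_isWalk_x
    (h : IsWalk (G19 l m pos neg).A (toV r) (toV (x p)) L) :
    L = [arc r (x p) 2] ∨ L = [arc r (z p) 1, arc (z p) (x p) 1] := by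
  obtain ⟨L, a, rfl, ha, hhead⟩ := h.exists_concat (by simp)
  obtain rfl | rfl := eq_of_head_eq_x ha hhead
  · obtain rfl := eq_nil_of_isWalk_r (isWalk_concat_iff.1 h).1
    exact .inl rfl
  · obtain rfl := eq_singleton_of_isWalk_z (isWalk_concat_iff.1 h).1
    exact .inr rfl

/-- The walk `r → z_p → x_p → v` at time 1. -/
def route (p : Literal l) (v : GadgetVertex l m) : List (TArc (V19 l m)) :=
  [arc r (z p) 1, arc (z p) (x p) 1, arc (x p) v 1]

theorem isWalk_route_iff {S : Finset (TArc (V19 l m))} {v : GadgetVertex l m} :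
    IsWalk S (toV r) (toV v) (route p v) ↔
      arc r (z p) 1 ∈ S ∧ arc (z p) (x p) 1 ∈ S ∧ arc (x p) v 1 ∈ S := by
  simp [route, IsWalk]

theorem concat_eq_route_of_isWalk {v : GadgetVertex l m}
    (h : IsWalk (G19 l m pos neg).A (toV r) (toV v) (L ++ [arc (x p) v 1])) :
    L ++ [arc (x p) v 1] = route p v := by
  obtain ⟨hL, htime, -⟩ := isWalk_concat_iff.1 h
  obtain rfl | rfl := eq_singleton_or_eq_pair_of_isWalk_x hL
  · simp at htime
  · rfl

theorem exists_eq_route_of_isWalk_y {i : Fin l}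
    (h : IsWalk (G19 l m pos neg).A (toV r) (toV (y i)) L) : ∃ b, L = route (b, i) (y i) := by
  obtain ⟨L, a, rfl, ha, hhead⟩ := h.exists_concat (by simp)
  obtain ⟨b, rfl⟩ := exists_eq_of_head_eq_y ha hhead
  exact ⟨b, concat_eq_route_of_isWalk h⟩

theorem exists_eq_route_of_isWalk_c {j : Fin m}
    (h : IsWalk (G19 l m pos neg).A (toV r) (toV (c j)) L) : ∃ p, L = route p (c j) := by
  obtain ⟨L, a, rfl, ha, hhead⟩ := h.exists_concat (by simp)
  obtain ⟨p, rfl⟩ := exists_eq_of_head_eq_c ha hhead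
  exact ⟨p, concat_eq_route_of_isWalk h⟩

end RootWalks

section OptimalWalks

variable {S : Finset (TArc (V19 l m))}

theorem hasOptimalWalk_r (hS : S ⊆ (G19 l m pos neg).A) :
    HasOptimalWalk .MT (G19 l m pos neg).A S (toV r) (toV r) :=
  (hasOptimalWalk_MT_iff hS).2 ⟨[], rfl, fun _ _ => Nat.zero_le _⟩

theorem hasOptimalWalk_z_iff (hS : S ⊆ (G19 l m pos neg).A) {p : Literal l} :
    HasOptimalWalk .MT (G19 l m pos neg).A S (toV r) (toV (z p)) ↔ arc r (z p) 1 ∈ S := by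
  rw [hasOptimalWalk_MT_iff_exists_isWalk hS fun L hL =>
    congrArg List.length (eq_singleton_of_isWalk_z hL)]
  constructor
  · rintro ⟨L, hL⟩
    obtain rfl := eq_singleton_of_isWalk_z (hL.mono hS)
    exact hL.1
  · exact fun h => ⟨[arc r (z p) 1], by simp [IsWalk, h]⟩

theorem hasOptimalWalk_x_iff (hS : S ⊆ (G19 l m pos neg).A) {p : Literal l} :
    HasOptimalWalk .MT (G19 l m pos neg).A S (toV r) (toV (x p)) ↔ arc r (x p) 2 ∈ S := by
  rw [hasOptimalWalk_MT_iff hS]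
  constructor
  · rintro ⟨L, hL, hmin⟩
    have hdirect : IsWalk (G19 l m pos neg).A (toV r) (toV (x p)) [arc r (x p) 2] := by
      simp [IsWalk, mem_arcs_iff.2 (.rx p)]
    obtain rfl | rfl := eq_singleton_or_eq_pair_of_isWalk_x (hL.mono hS)
    · exact hL.1
    · simpa using hmin _ hdirect
  · intro h
    refine ⟨[arc r (x p) 2], by simp [IsWalk, h], fun L' hL' => ?_⟩
    obtain rfl | rfl := eq_singleton_or_eq_pair_of_isWalk_x hL' <;> simp

theorem hasOptimalWalk_y_iff (hS : S ⊆ (G19 l m pos neg).A) {i : Fin l} :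
    HasOptimalWalk .MT (G19 l m pos neg).A S (toV r) (toV (y i)) ↔
      ∃ b, arc r (z (b, i)) 1 ∈ S ∧ arc (z (b, i)) (x (b, i)) 1 ∈ S ∧
        arc (x (b, i)) (y i) 1 ∈ S := by
  have hlength (L) (hL : IsWalk (G19 l m pos neg).A (toV r) (toV (y i)) L) : L.length = 3 := by
    obtain ⟨_, rfl⟩ := exists_eq_route_of_isWalk_y hL
    rfl
  rw [hasOptimalWalk_MT_iff_exists_isWalk hS hlength]
  constructor
  · rintro ⟨L, hL⟩
    obtain ⟨b, rfl⟩ := exists_eq_route_of_isWalk_y (hL.mono hS)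
    exact ⟨b, isWalk_route_iff.1 hL⟩
  · rintro ⟨b, h⟩
    exact ⟨route (b, i) (y i), isWalk_route_iff.2 h⟩

theorem hasOptimalWalk_c_iff (hS : S ⊆ (G19 l m pos neg).A) {j : Fin m} :
    HasOptimalWalk .MT (G19 l m pos neg).A S (toV r) (toV (c j)) ↔
      ∃ p, arc r (z p) 1 ∈ S ∧ arc (z p) (x p) 1 ∈ S ∧ arc (x p) (c j) 1 ∈ S := by
  have hlength (L) (hL : IsWalk (G19 l m pos neg).A (toV r) (toV (c j)) L) : L.length = 3 := by
    obtain ⟨_, rfl⟩ := exists_eq_route_of_isWalk_c hL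
    rfl
  rw [hasOptimalWalk_MT_iff_exists_isWalk hS hlength]
  constructor
  · rintro ⟨L, hL⟩
    obtain ⟨p, rfl⟩ := exists_eq_route_of_isWalk_c (hL.mono hS)
    exact ⟨p, isWalk_route_iff.1 hL⟩
  · rintro ⟨p, h⟩
    exact ⟨route p (c j), isWalk_route_iff.2 h⟩

end OptimalWalks

section SelectedArcs

variable {σ : Fin l → Bool} {e : Fin m → Literal l} {S : Finset (TArc (V19 l m))}

/-- Indices for the `2l + 2l + l + l + m` arcs of a smallest MT-TOSS. -/
abbrev ArcIndex (l m : ℕ) := Literal l ⊕ Literal l ⊕ Fin l ⊕ Fin l ⊕ Fin m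

/-- All arcs leaving the root, the arcs `z_p → x_p → y_i` for the literal `p = (σ i, i)` of each
variable `i`, and the arc from the literal `e j` to each clause `j`. -/
def selectedArc (σ : Fin l → Bool) (e : Fin m → Literal l) : ArcIndex l m → TArc (V19 l m)
  | .inl p => arc r (x p) 2
  | .inr (.inl p) => arc r (z p) 1
  | .inr (.inr (.inl i)) => arc (z (σ i, i)) (x (σ i, i)) 1
  | .inr (.inr (.inr (.inl i))) => arc (x (σ i, i)) (y i) 1
  | .inr (.inr (.inr (.inr j))) => arc (x (e j)) (c j) 1

theorem selectedArc_injective : Function.Injective (selectedArc σ e) := by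
  rintro (p | p | i | i | j) (p' | p' | i' | i' | j') h <;> simp_all [selectedArc]

/-- The arc set of size `6l + m` determined by an assignment `σ` and a literal `e j` for each
clause `j`. -/
noncomputable def selectedArcs (σ : Fin l → Bool) (e : Fin m → Literal l) :
    Finset (TArc (V19 l m)) :=
  Finset.univ.image (selectedArc σ e)

theorem card_selectedArcs : (selectedArcs σ e).card = 6 * l + m := by
  rw [selectedArcs, Finset.card_image_of_injective _ selectedArc_injective, Finset.card_univ]
  simp only [Fintype.card_sum, Fintype.card_prod, Fintype.card_bool, Fintype.card_fin]
  omega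

theorem selectedArcs_subset_iff : selectedArcs σ e ⊆ S ↔
    (∀ p, arc r (x p) 2 ∈ S) ∧ (∀ p, arc r (z p) 1 ∈ S) ∧
    (∀ i, arc (z (σ i, i)) (x (σ i, i)) 1 ∈ S) ∧ (∀ i, arc (x (σ i, i)) (y i) 1 ∈ S) ∧
    ∀ j, arc (x (e j)) (c j) 1 ∈ S := by
  simp only [selectedArcs, Finset.image_subset_iff, Finset.mem_univ, forall_true_left, Sum.forall,
    selectedArc]

theorem zx_mem_selectedArcs_iff {p : Literal l} :
    arc (z p) (x p) 1 ∈ selectedArcs σ e ↔ σ p.2 = p.1 := by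
  obtain ⟨b, i⟩ := p
  simp [selectedArcs, selectedArc]

theorem hasOptimalWalk_iff_exists_selectedArcs_subset (hS : S ⊆ (G19 l m pos neg).A) :
    (∀ v, HasOptimalWalk .MT (G19 l m pos neg).A S (toV r) v) ↔
      ∃ σ e, selectedArcs σ e ⊆ S ∧ ∀ j, arc (z (e j)) (x (e j)) 1 ∈ S := by
  constructor
  · intro h
    have hrx p := (hasOptimalWalk_x_iff hS).1 (h (toV (x p)))
    have hrz p := (hasOptimalWalk_z_iff hS).1 (h (toV (z p)))
    choose σ _ hzx hxy using fun i => (hasOptimalWalk_y_iff hS).1 (h (toV (y i)))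
    choose e _ hzxe hxc using fun j => (hasOptimalWalk_c_iff hS).1 (h (toV (c j)))
    exact ⟨σ, e, selectedArcs_subset_iff.2 ⟨hrx, hrz, hzx, hxy, hxc⟩, hzxe⟩
  · rintro ⟨σ, e, hsub, hzxe⟩
    obtain ⟨hrx, hrz, hzx, hxy, hxc⟩ := selectedArcs_subset_iff.1 hsub
    rw [toV.surjective.forall]
    rintro (p | p | i | j | _)
    · exact (hasOptimalWalk_x_iff hS).2 (hrx p)
    · exact (hasOptimalWalk_z_iff hS).2 (hrz p)
    · exact (hasOptimalWalk_y_iff hS).2 ⟨σ i, hrz _, hzx i, hxy i⟩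
    · exact (hasOptimalWalk_c_iff hS).2 ⟨e j, hrz _, hzxe j, hxc j⟩
    · exact hasOptimalWalk_r hS

theorem selectedArcs_subset_arcs (he : ∀ j, Occurs pos neg (e j) j) :
    selectedArcs σ e ⊆ (G19 l m pos neg).A :=
  selectedArcs_subset_iff.2 ⟨fun p => mem_arcs_iff.2 (.rx p), fun p => mem_arcs_iff.2 (.rz p),
    fun i => mem_arcs_iff.2 (.zx (σ i, i)), fun i => mem_arcs_iff.2 (.xy (σ i, i)),
    fun j => mem_arcs_iff.2 (.xc (he j))⟩

theorem exists_arcs_of_satisfiable (h : Satisfiable l m pos neg) :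
    ∃ S ⊆ (G19 l m pos neg).A, S.card ≤ 6 * l + m ∧
      ∀ v, HasOptimalWalk .MT (G19 l m pos neg).A S (toV r) v := by
  obtain ⟨σ, hσ⟩ := satisfiable_iff_exists_occurs.1 h
  choose i hi using hσ
  have hsub := selectedArcs_subset_arcs (σ := σ) hi
  refine ⟨_, hsub, card_selectedArcs.le, ?_⟩
  rw [hasOptimalWalk_iff_exists_selectedArcs_subset hsub]
  exact ⟨σ, _, subset_rfl, fun j => zx_mem_selectedArcs_iff.2 rfl⟩

theorem satisfiable_of_hasOptimalWalk (hS : S ⊆ (G19 l m pos neg).A) (hcard : S.card ≤ 6 * l + m)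
    (hwalk : ∀ v, HasOptimalWalk .MT (G19 l m pos neg).A S (toV r) v) :
    Satisfiable l m pos neg := by
  obtain ⟨σ, e, hsub, hzxe⟩ := (hasOptimalWalk_iff_exists_selectedArcs_subset hS).1 hwalk
  obtain rfl : selectedArcs σ e = S :=
    Finset.eq_of_subset_of_card_le hsub (hcard.trans card_selectedArcs.ge)
  obtain ⟨-, -, -, -, hxc⟩ := selectedArcs_subset_iff.1 hS
  refine satisfiable_iff_exists_occurs.2 ⟨σ, fun j => ⟨(e j).2, ?_⟩⟩
  rw [zx_mem_selectedArcs_iff.1 (hzxe j)]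
  exact occurs_of_mem_arcs (hxc j)

end SelectedArcs

end GadgetVertex

/-- Theorem `thm:MT_min_hard`, elapsed time 0 case: the CNF formula is
satisfiable iff the reduction graph has an MT-TOSS `G' = (V, A', 2)` with root `r` such that
`|A'| ≤ 6l + m`. -/
theorem stmt_19 (l m : ℕ) (pos neg : Fin m → Finset (Fin l))
    (hne : ∀ j, (pos j ∪ neg j).Nonempty) :
    Satisfiable l m pos neg ↔
      ∃ G' : TempGraph (V19 l m),
        IsDTOSS DistKind.MT (G19 l m pos neg) G' (rt19 l m) ∧ G'.τ = 2 ∧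
          G'.A.card ≤ 6 * l + m := by
  refine Iff.trans ?_ exists_isDTOSS_card_le_iff.symm
  constructor
  · intro h
    obtain ⟨S, hS, hcard, hwalk⟩ := GadgetVertex.exists_arcs_of_satisfiable h
    exact ⟨S, hS, hcard, fun v _ => hwalk v⟩
  · rintro ⟨S, hS, hcard, hwalk⟩
    exact GadgetVertex.satisfiable_of_hasOptimalWalk hS hcard fun v => hwalk v (Finset.mem_univ v)
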